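/- Let n = rm with r, m > 1 and 1 < k ≤ m. Let C₁ = Orb(V_{1,1}) ∪ … ∪ Orb(V_{1,s₁}) ⊆ G_q(m,k) and C₂ = Orb(V_{2,1}) ∪ … ∪ Orb(V_{2,s₂}) ⊆ G_q(n,m) be cyclic subspace codes, where each V_{2,h} = Im(Φ_{2,h}) for an injective F_q-linear map Φ_{2,h}: F_{q^m} → F_{q^n}. If C₂ has full-length and d(C₂) > 2(m−k), then the code C₂ ⊙ C₁ has full-length: for every index h, every h₁, every α ∈ F_{q^m}* and every β ∈ F_{q^n}*, the equality β·Φ_{2,h}(αV_{1,h₁}) = Φ_{2,h}(αV_{1,h₁}) forces β ∈ F_q*. -/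

import Mathlib

/-!
Let `X = Im Φ_h` and let `U ⊆ X` be the `k`-dimensional image `Φ_h(α V₁)`. If `β U = U`, then
`U ⊆ X ∩ β X`, so `dim (X ∩ β X) ≥ k` and `d(X, β X) = 2m - 2 dim (X ∩ β X) ≤ 2(m - k)`.
Both `X` and `β X` are codewords of `C₂`, whose minimum distance exceeds `2(m - k)`; hence
`β X = X`, and the full-length hypothesis on `C₂` gives `β ∈ F_q`.
-/

open Module Submodule Filter

noncomputable section

/-- For `α` in a field `F` and an `Fq`-subspace `V` of `F`,
the subspace `α·V = {α·v : v ∈ V}`. -/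
def mulSub {Fq F : Type*} [Field Fq] [Field F] [Algebra Fq F]
    (α : F) (V : Submodule Fq F) : Submodule Fq F :=
  V.map (LinearMap.mulLeft Fq α)

/-- The orbit `Orb(V) = {α·V : α ∈ Fˣ}` of a subspace `V` under the Singer cycle. -/
def orb {Fq F : Type*} [Field Fq] [Field F] [Algebra Fq F]
    (V : Submodule Fq F) : Set (Submodule Fq F) :=
  {W | ∃ α : Fˣ, W = mulSub (α : F) V}

/-- The subspace distance `d(U,W) = dim(U+W) - dim(U∩W)`. -/
def sdist {Fq F : Type*} [Field Fq] [Field F] [Algebra Fq F]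
    (U W : Submodule Fq F) : ℕ :=
  finrank Fq ↥(U ⊔ W) - finrank Fq ↥(U ⊓ W)

/-- The minimum distance of a subspace code `C`:
the minimum of `d(U,W)` over distinct `U, W ∈ C`. -/
def minDist {Fq F : Type*} [Field Fq] [Field F] [Algebra Fq F]
    (C : Set (Submodule Fq F)) : ℕ :=
  sInf {d : ℕ | ∃ U ∈ C, ∃ W ∈ C, U ≠ W ∧ d = sdist U W}

/-- `Orb(V)` has full-length, i.e. the stabilizer of `V` is `Fq^*`:
`β·V = V` with `β ≠ 0` forces `β ∈ Fq`. -/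
def FullLengthOrbit {Fq F : Type*} [Field Fq] [Field F] [Algebra Fq F]
    (V : Submodule Fq F) : Prop :=
  ∀ β : F, β ≠ 0 → mulSub β V = V → β ∈ Set.range (algebraMap Fq F)

theorem finrank_map_of_injective {K V W : Type*} [Field K] [AddCommGroup V] [Module K V]
    [AddCommGroup W] [Module K W] {f : V →ₗ[K] W} (hf : Function.Injective f)
    (S : Submodule K V) : finrank K ↥(S.map f) = finrank K ↥S :=
  (Submodule.equivMapOfInjective f hf S).finrank_eq.symm

theorem finrank_mulSub {Fq F : Type*} [Field Fq] [Field F] [Algebra Fq F]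
    {β : F} (hβ : β ≠ 0) (V : Submodule Fq F) :
    finrank Fq ↥(mulSub β V) = finrank Fq ↥V :=
  finrank_map_of_injective (fun _ _ hxy => mul_left_cancel₀ hβ hxy) V

/-- If the multi-orbit code `C₂` has full-length and `d(C₂) > 2(m-k)`,
then the code `C₂ ⊙ C₁` has full-length. -/
theorem statement1
    {Fq Fm Fn : Type*} [Field Fq] [Field Fm] [Field Fn] [Fintype Fq]
    [Algebra Fq Fm] [Algebra Fq Fn]
    (q r m n k s₁ s₂ : ℕ) (hq : Fintype.card Fq = q)
    (hr : 1 < r) (hm1 : 1 < m) (hn : n = r * m)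
    (hdm : finrank Fq Fm = m) (hdn : finrank Fq Fn = n)
    (hk1 : 1 < k) (hkm : k ≤ m)
    (V₁ : Fin s₁ → Submodule Fq Fm) (hV₁ : ∀ i, finrank Fq ↥(V₁ i) = k)
    (Φ : Fin s₂ → (Fm →ₗ[Fq] Fn)) (hΦinj : ∀ i, Function.Injective (Φ i))
    (hV₂ : ∀ i, finrank Fq ↥(LinearMap.range (Φ i)) = m)
    (C₂ : Set (Submodule Fq Fn)) (hC₂ : C₂ = ⋃ i, orb (LinearMap.range (Φ i)))
    (hfull : ∀ X ∈ C₂, FullLengthOrbit X)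
    (hdist : 2 * (m - k) < minDist C₂) :
    ∀ (h : Fin s₂) (h₁ : Fin s₁) (α : Fmˣ) (β : Fn), β ≠ 0 →
      mulSub β (Submodule.map (Φ h) (mulSub (α : Fm) (V₁ h₁))) =
        Submodule.map (Φ h) (mulSub (α : Fm) (V₁ h₁)) →
      β ∈ Set.range (algebraMap Fq Fn) := by
  intro h h₁ α β hβ hstab
  have hfd : FiniteDimensional Fq Fn :=
    FiniteDimensional.of_finrank_pos (by rw [hdn, hn]; positivity)
  set X := LinearMap.range (Φ h) with hX
  set U := Submodule.map (Φ h) (mulSub (α : Fm) (V₁ h₁)) with hU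
  have hXC : X ∈ C₂ := by
    rw [hC₂]
    exact Set.mem_iUnion.mpr ⟨h, 1, by simp [mulSub, hX]⟩
  have hβXC : mulSub β X ∈ C₂ := by
    rw [hC₂]
    exact Set.mem_iUnion.mpr ⟨h, Units.mk0 β hβ, rfl⟩
  by_cases heq : mulSub β X = X
  · exact hfull X hXC β hβ heq
  exfalso
  have hUX : U ≤ X := LinearMap.map_le_range
  have hUβX : U ≤ mulSub β X := by
    rw [← hstab]
    exact Submodule.map_mono hUX
  have hUk : finrank Fq U = k := by
    rw [hU, finrank_map_of_injective (hΦinj h), finrank_mulSub α.ne_zero, hV₁]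
  have hinf : k ≤ finrank Fq ↥(X ⊓ mulSub β X) := by
    rw [← hUk]
    exact Submodule.finrank_mono (le_inf hUX hUβX)
  have hsum := Submodule.finrank_sup_add_finrank_inf_eq X (mulSub β X)
  rw [finrank_mulSub hβ, hV₂ h] at hsum
  have hmin : minDist C₂ ≤ sdist X (mulSub β X) :=
    Nat.sInf_le ⟨X, hXC, mulSub β X, hβXC, Ne.symm heq, rfl⟩
  unfold sdist at hmin
  omega
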